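/- (Duran, via convolution) For every complex sequence (s_n)_{n∈ℕ} there exists a Schwartz function f : ℝ → ℂ with supp f ⊆ [0,∞) such that s_n = ∫ xⁿ · f(x) dx for all n ∈ ℕ. -/

import Mathlib

open MeasureTheory

open scoped ContDiff in
lemma aux_integrable (f : SchwartzMap ℝ ℂ) (k : ℕ) :
    Integrable (fun x : ℝ => ((x : ℝ) : ℂ) ^ k * f x) := by
  refine (f.integrable_pow_mul volume k).mono' ?_ ?_
  · exact (Continuous.mul (by fun_prop) f.continuous).aestronglyMeasurable
  · exact Filter.Eventually.of_forall fun x => by simp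

lemma aux_parts (f : SchwartzMap ℝ ℂ) (k : ℕ) :
    ∫ x : ℝ, (x : ℂ) ^ k * (SchwartzMap.derivCLM ℝ ℂ f) x
      = - ((k : ℂ) * ∫ x : ℝ, (x : ℂ) ^ (k - 1) * f x) := by
  have h := integral_mul_deriv_eq_deriv_mul_of_integrable
    (u := fun x : ℝ => (x : ℂ) ^ k) (u' := fun x : ℝ => (k : ℂ) * (x : ℂ) ^ (k - 1))
    (v := f) (v' := SchwartzMap.derivCLM ℝ ℂ f) ?_ ?_ ?_ ?_ ?_
  · rw [h]
    simp_rw [mul_assoc]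
    rw [integral_const_mul]
  · intro x _
    have := (hasDerivAt_pow k (x : ℂ)).comp_ofReal
    simpa using this
  · intro x _
    exact f.hasDerivAt x
  · exact aux_integrable _ k
  · have := (aux_integrable f (k - 1)).const_mul (k : ℂ)
    simp_rw [← mul_assoc] at this
    exact this
  · exact aux_integrable _ k

open scoped ContDiff in
lemma aux_base : ∃ g : SchwartzMap ℝ ℂ, (∀ x < 0, g x = 0) ∧ ∫ x : ℝ, g x ≠ 0 := by
  let b : ContDiffBump (2 : ℝ) := ⟨1 / 2, 1, by norm_num, by norm_num⟩
  have h1 : HasCompactSupport (fun x : ℝ => ((b x : ℝ) : ℂ)) :=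
    b.hasCompactSupport.comp_left (g := fun r : ℝ => (r : ℂ)) (by simp)
  have h2 : ContDiff ℝ ∞ (fun x : ℝ => ((b x : ℝ) : ℂ)) :=
    Complex.ofRealCLM.contDiff.comp b.contDiff
  refine ⟨h1.toSchwartzMap h2, ?_, ?_⟩
  · intro x hx
    change ((b x : ℝ) : ℂ) = 0
    rw [b.zero_of_le_dist]
    · simp
    · rw [Real.dist_eq, abs_of_neg (by linarith)]
      change (1 : ℝ) ≤ _
      linarith
  · change ∫ x : ℝ, ((b x : ℝ) : ℂ) ≠ 0
    rw [integral_complex_ofReal]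
    exact_mod_cast (b.integral_pos (μ := volume)).ne'

lemma aux_gen (n : ℕ) : ∃ g : SchwartzMap ℝ ℂ, (∀ x < 0, g x = 0) ∧
    (∀ k < n, ∫ x : ℝ, (x : ℂ) ^ k * g x = 0) ∧ ∫ x : ℝ, (x : ℂ) ^ n * g x ≠ 0 := by
  induction n with
  | zero =>
    obtain ⟨g, h1, h2⟩ := aux_base
    exact ⟨g, h1, by simp, by simpa using h2⟩
  | succ n ih =>
    obtain ⟨g, h1, h2, h3⟩ := ih
    refine ⟨SchwartzMap.derivCLM ℝ ℂ g, ?_, ?_, ?_⟩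
    · intro x hx
      rw [SchwartzMap.derivCLM_apply]
      have : (g : ℝ → ℂ) =ᶠ[nhds x] fun _ => 0 := by
        filter_upwards [Iio_mem_nhds hx] with y hy using h1 y hy
      rw [this.deriv_eq]
      simp
    · intro k hk
      rw [aux_parts]
      rcases k with _ | k
      · simp
      · rw [Nat.add_sub_cancel, h2 k (by omega)]
        simp
    · rw [aux_parts, Nat.add_sub_cancel]
      exact neg_ne_zero.2 (mul_ne_zero (by exact_mod_cast Nat.succ_ne_zero n) h3)

lemma aux_scale (g : SchwartzMap ℝ ℂ) (t : ℝ) (ht : 0 < t) :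
    ∃ f : SchwartzMap ℝ ℂ, ∀ x, f x = g (t * x) := by
  refine ⟨SchwartzMap.compCLMOfContinuousLinearEquiv ℝ
    (ContinuousLinearEquiv.unitsEquivAut ℝ (Units.mk0 t ht.ne')) g, fun x => ?_⟩
  simp [mul_comm]

lemma aux_corr (n : ℕ) (c : ℂ) : ∃ g : SchwartzMap ℝ ℂ, (∀ x < 0, g x = 0) ∧
    (∀ k < n, ∫ x : ℝ, (x : ℂ) ^ k * g x = 0) ∧ ∫ x : ℝ, (x : ℂ) ^ n * g x = c ∧
    ∀ k ≤ n, ∀ l ≤ n, SchwartzMap.seminorm ℝ k l g ≤ (1 / 2 : ℝ) ^ n := by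
  obtain ⟨g, h1, h2, h3⟩ := aux_gen n
  set a : ℂ := c / ∫ x : ℝ, (x : ℂ) ^ n * g x with ha
  set S : ℝ := ∑ k ∈ Finset.range (n + 1), ∑ l ∈ Finset.range (n + 1),
    SchwartzMap.seminorm ℝ k l g with hS
  have hS0 : 0 ≤ S := Finset.sum_nonneg fun k _ => Finset.sum_nonneg fun l _ => apply_nonneg _ _
  have hkl : ∀ k ≤ n, ∀ l ≤ n, SchwartzMap.seminorm ℝ k l g ≤ S := by
    intro k hk l hl
    refine le_trans ?_ (Finset.single_le_sum (f := fun k => ∑ l ∈ Finset.range (n + 1),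
      SchwartzMap.seminorm ℝ k l g) (fun k _ => Finset.sum_nonneg fun l _ => apply_nonneg _ _)
      (Finset.mem_range.2 (Nat.lt_succ_of_le hk)))
    exact Finset.single_le_sum (f := fun l => SchwartzMap.seminorm ℝ k l g)
      (fun l _ => apply_nonneg _ _) (Finset.mem_range.2 (Nat.lt_succ_of_le hl))
  obtain ⟨t, ht0, ht1, htS⟩ : ∃ t : ℝ, 0 < t ∧ t ≤ 1 ∧ t * (‖a‖ * S) ≤ (1 / 2 : ℝ) ^ n := by
    have hB : 0 ≤ ‖a‖ * S := by positivity
    have hp : 0 < (1 / 2 : ℝ) ^ n := by positivity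
    refine ⟨(1 / 2 : ℝ) ^ n / (1 + ‖a‖ * S), by positivity, ?_, ?_⟩
    · rw [div_le_one (by positivity)]
      have : (1 / 2 : ℝ) ^ n ≤ 1 := pow_le_one₀ (by norm_num) (by norm_num)
      linarith
    · rw [div_mul_eq_mul_div, div_le_iff₀ (by positivity)]
      nlinarith
  obtain ⟨h, hh⟩ := aux_scale g t ht0
  have hmom : ∀ k, ∫ x : ℝ, (x : ℂ) ^ k * ((a * (t : ℂ) ^ (n + 1)) • h) x
      = a * (t : ℂ) ^ (n + 1) * ((t : ℂ) ^ (k + 1))⁻¹ * ∫ x : ℝ, (x : ℂ) ^ k * g x := by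
    intro k
    have htc : (t : ℂ) ≠ 0 := by exact_mod_cast ht0.ne'
    have e := Measure.integral_comp_mul_left (fun x : ℝ => (x : ℂ) ^ k * g x) t
    have e2 : ∀ x : ℝ, (x : ℂ) ^ k * ((a * (t : ℂ) ^ (n + 1)) • h) x
        = (a * (t : ℂ) ^ (n + 1) * ((t : ℂ) ^ k)⁻¹) * (((t * x : ℝ) : ℂ) ^ k * g (t * x)) := by
      intro x
      simp only [smul_apply, smul_eq_mul, hh]
      push_cast
      rw [mul_pow]
      field_simp
    simp_rw [e2]
    rw [integral_const_mul, e, abs_of_pos (by positivity), Complex.real_smul]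
    push_cast
    field_simp
    ring
  refine ⟨(a * (t : ℂ) ^ (n + 1)) • h, ?_, ?_, ?_, ?_⟩
  · intro x hx
    simp [hh, h1 (t * x) (mul_neg_of_pos_of_neg ht0 hx)]
  · intro k hk
    rw [hmom, h2 k hk, mul_zero]
  · rw [hmom, ha]
    have htc : (t : ℂ) ≠ 0 := by exact_mod_cast ht0.ne'
    field_simp
  · intro k hk l hl
    refine le_trans ?_ htS
    refine SchwartzMap.seminorm_le_bound' ℝ k l _ (by positivity) fun x => ?_
    have e1 : (⇑((a * (t : ℂ) ^ (n + 1)) • h) : ℝ → ℂ)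
        = fun x => (a * (t : ℂ) ^ (n + 1)) • g (t * x) := by
      funext x
      simp [hh]
    have e2 : iteratedDeriv l (⇑((a * (t : ℂ) ^ (n + 1)) • h) : ℝ → ℂ) x
        = (a * (t : ℂ) ^ (n + 1)) • (t ^ l • iteratedDeriv l g (t * x)) := by
      have hg : ContDiff ℝ l g := g.smooth l
      rw [e1, iteratedDeriv_fun_const_smul, iteratedDeriv_comp_const_smul hg t]
      exact (hg.comp (contDiff_const.mul contDiff_id)).contDiffAt
    rw [e2, norm_smul, norm_smul, norm_mul, norm_pow, norm_pow, Complex.norm_real,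
      Real.norm_eq_abs, abs_of_pos ht0]
    have e3 := (SchwartzMap.le_seminorm' ℝ k l g (t * x)).trans (hkl k hk l hl)
    rw [abs_mul, abs_of_pos ht0, mul_pow] at e3
    obtain ⟨m, rfl⟩ := Nat.exists_eq_add_of_le hk
    have e4 : t ^ m * t ^ l ≤ 1 :=
      mul_le_one₀ (pow_le_one₀ ht0.le ht1) (by positivity) (pow_le_one₀ ht0.le ht1)
    calc _ = (t * ‖a‖) * ((t ^ m * t ^ l) *
          (t ^ k * |x| ^ k * ‖iteratedDeriv l g (t * x)‖)) := by ring
      _ ≤ (t * ‖a‖) * (1 * S) := by gcongr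
      _ = t * (‖a‖ * S) := by ring

lemma aux_sum (G : ℕ → SchwartzMap ℝ ℂ)
    (hG : ∀ k l, Summable fun n => SchwartzMap.seminorm ℝ k l (G n)) :
    ∃ f : SchwartzMap ℝ ℂ, (∀ x, f x = ∑' n, G n x) ∧
      ∀ k : ℕ, HasSum (fun n => ∫ x : ℝ, (x : ℂ) ^ k * G n x) (∫ x : ℝ, (x : ℂ) ^ k * f x) := by
  have hb : ∀ (k : ℕ) (i : ℕ) (x : ℝ), ((k : ℕ∞) ≤ (⊤ : ℕ∞)) →
      ‖iteratedFDeriv ℝ k (G i) x‖ ≤ SchwartzMap.seminorm ℝ 0 k (G i) := by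
    intro k i x _
    exact SchwartzMap.norm_iteratedFDeriv_le_seminorm ℝ (G i) k x
  have hd : ∀ i, ContDiff ℝ (⊤ : ℕ∞) (G i) := fun i => (G i).smooth ⊤
  have hle : ∀ k x i, ‖x‖ ^ k * ‖G i x‖ ≤ SchwartzMap.seminorm ℝ k 0 (G i) := by
    intro k x i
    exact SchwartzMap.norm_pow_mul_le_seminorm ℝ (G i) k x
  have hsx : ∀ x, Summable fun n => G n x := by
    intro x
    refine Summable.of_norm_bounded (hG 0 0) fun i => ?_
    simpa using hle 0 x i
  let f : SchwartzMap ℝ ℂ :=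
    { toFun := fun x => ∑' n, G n x
      smooth' := contDiff_tsum hd (fun k _ => hG 0 k) hb
      decay' := by
        intro k l
        refine ⟨∑' i, SchwartzMap.seminorm ℝ k l (G i), fun x => ?_⟩
        rw [iteratedFDeriv_tsum_apply hd (fun k _ => hG 0 k) hb le_top]
        have hs : Summable fun i => ‖iteratedFDeriv ℝ l (G i) x‖ :=
          Summable.of_nonneg_of_le (fun _ => norm_nonneg _) (fun i => hb l i x le_top) (hG 0 l)
        calc _ ≤ ‖x‖ ^ k * ∑' i, ‖iteratedFDeriv ℝ l (G i) x‖ := by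
              gcongr
              exact norm_tsum_le_tsum_norm hs
          _ = ∑' i, ‖x‖ ^ k * ‖iteratedFDeriv ℝ l (G i) x‖ := by rw [tsum_mul_left]
          _ ≤ _ := (hs.mul_left _).tsum_le_tsum
              (fun i => SchwartzMap.le_seminorm ℝ k l (G i) x) (hG k l) }
  have hf : ∀ x, f x = ∑' n, G n x := fun x => rfl
  refine ⟨f, hf, fun k => ?_⟩
  have hsum : Summable fun n =>
      (SchwartzMap.seminorm ℝ k 0 (G n) + SchwartzMap.seminorm ℝ (k + 2) 0 (G n)) :=
    (hG k 0).add (hG (k + 2) 0)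
  refine hasSum_integral_of_dominated_convergence
    (fun n x => (SchwartzMap.seminorm ℝ k 0 (G n) + SchwartzMap.seminorm ℝ (k + 2) 0 (G n))
      * (1 + x ^ 2)⁻¹) ?_ ?_ ?_ ?_ ?_
  · exact fun n => (aux_integrable (G n) k).aestronglyMeasurable
  · refine fun n => Filter.Eventually.of_forall fun x => ?_
    rw [← div_eq_mul_inv, le_div_iff₀ (by positivity)]
    have e1 := hle k x n
    have e2 := hle (k + 2) x n
    have : ‖(x : ℂ) ^ k * G n x‖ * (1 + x ^ 2)
        = ‖x‖ ^ k * ‖G n x‖ + ‖x‖ ^ (k + 2) * ‖G n x‖ := by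
      rw [norm_mul, norm_pow, Complex.norm_real, pow_add, Real.norm_eq_abs, sq_abs]
      ring
    linarith
  · exact Filter.Eventually.of_forall fun x => hsum.mul_right _
  · simp_rw [tsum_mul_right]
    exact integrable_inv_one_add_sq.const_mul _
  · exact Filter.Eventually.of_forall fun x => by
      simpa [hf] using (hsx x).hasSum.mul_left ((x : ℂ) ^ k)

/-- (Duran) Every complex sequence is the moment sequence of a Schwartz function
supported in `[0,∞)`. -/
theorem stmt9 (s : ℕ → ℂ) :
    ∃ f : SchwartzMap ℝ ℂ, tsupport ⇑f ⊆ Set.Ici 0 ∧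
      ∀ n : ℕ, s n = ∫ x, ((x : ℝ) : ℂ) ^ n * f x := by
  choose C hC0 hC1 hC2 hC3 using aux_corr
  let F : ℕ → SchwartzMap ℝ ℂ := fun n => Nat.rec 0
    (fun n P => P + C n (s n - ∫ x : ℝ, (x : ℂ) ^ n * P x)) n
  let G : ℕ → SchwartzMap ℝ ℂ := fun n => C n (s n - ∫ x : ℝ, (x : ℂ) ^ n * F n x)
  have hF : ∀ n, F (n + 1) = F n + G n := fun n => rfl
  have hFm : ∀ k n, ∫ x : ℝ, (x : ℂ) ^ k * F n x
      = ∑ i ∈ Finset.range n, ∫ x : ℝ, (x : ℂ) ^ k * G i x := by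
    intro k n
    induction n with
    | zero => simp [F]
    | succ n ih =>
      rw [Finset.sum_range_succ, ← ih, hF,
        ← integral_add (aux_integrable _ k) (aux_integrable _ k)]
      simp [mul_add]
  have hG : ∀ k l, Summable fun n => SchwartzMap.seminorm ℝ k l (G n) := by
    intro k l
    rw [← summable_nat_add_iff (k + l)]
    refine Summable.of_nonneg_of_le (fun _ => apply_nonneg _ _)
      (fun n => hC3 (n + (k + l)) _ k (by omega) l (by omega)) ?_
    exact (summable_nat_add_iff (k + l)).2 (summable_geometric_of_lt_one (by norm_num) (by norm_num))
  obtain ⟨f, hf, hm⟩ := aux_sum G hG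
  refine ⟨f, ?_, fun k => ?_⟩
  · refine closure_minimal ?_ isClosed_Ici
    intro x hx
    by_contra hneg
    apply hx
    rw [hf]
    have : ∀ n, G n x = 0 := fun n => hC0 n _ x (not_le.1 hneg)
    simp [this]
  · refine HasSum.unique (f := fun n => ∫ x : ℝ, (x : ℂ) ^ k * G n x) ?_ (hm k)
    have h0 := hasSum_sum_of_ne_finset_zero (f := fun n => ∫ x : ℝ, (x : ℂ) ^ k * G n x)
      (s := Finset.range (k + 1)) (L := SummationFilter.unconditional ℕ) (fun n hn => hC1 n _ k (by simpa using hn))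
    rw [Finset.sum_range_succ, ← hFm, hC2 k] at h0
    simpa using h0
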